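/- Let f : 𝔻ⁿ → 𝔻 be holomorphic and C²-smooth on the closed polydisc with f(ζ) = 1 at the point ζ = (1,…,1) ∈ 𝕋ⁿ. Then there exist a neighbourhood U of ζ and a constant C > 0 such that for all z ∈ 𝔻ⁿ ∩ U: |f(z) - 1| ≤ C·|∂f/∂z_1(ζ)·(z_1 - 1) + … + ∂f/∂z_n(ζ)·(z_n - 1)|. -/

import Mathlib

/-
Write `a_j = ∂f/∂z_j(ζ)`. Since `f` maps the closed polydisc into the closed disc and `f ζ = 1`, all
`a_j` are nonnegative reals. Let `F` be the face of the closed polydisc on which `z_j = 1` whenever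
`a_j ≠ 0`, and let `p` be the coordinate projection of `z` onto `F`. The derivative of `f` along `F`
vanishes at `ζ`, so Hopf's boundary lemma and the maximum principle give `f = 1` on `F`. For
`a_j ≠ 0` the function `∂f/∂z_j` is therefore nonnegative on `F`; being holomorphic along `F`, it is
constant there. Hence the Taylor expansion of `f` at `p` has the linear term
`S z = ∑ j, a_j (z_j - 1)`, i.e. `f z - 1 = S z + O(‖z - p‖²)`, and `‖z_j - 1‖² ≤ 2 Re (1 - z_j)`
bounds the error by a multiple of `‖S z‖`.
-/

open MeasureTheory Metric Set ENNReal

noncomputable section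

/-- The open unit polydisc in `ℂⁿ`. -/
def polydisc (n : ℕ) : Set (Fin n → ℂ) := {z | ∀ j, ‖z j‖ < 1}

/-- The closed unit polydisc in `ℂⁿ`. -/
def closedPolydisc (n : ℕ) : Set (Fin n → ℂ) := {z | ∀ j, ‖z j‖ ≤ 1}

/-- The distinguished boundary (torus) of the polydisc. -/
def torus (n : ℕ) : Set (Fin n → ℂ) := {z | ∀ j, ‖z j‖ = 1}

section

open Complex Filter Asymptotics Topology
open scoped ComplexOrder

section UpToBoundary

variable {E F : Type*} [NormedAddCommGroup E] [NormedSpace ℂ E]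
  [NormedAddCommGroup F] [NormedSpace ℂ F] {f : E → F} {s : Set E} {x : E}

lemma differentiableWithinAt_complex_of_map_I_smul {L : E →L[ℝ] F}
    (hf : HasFDerivWithinAt f L s x) (hL : ∀ v, L (I • v) = I • L v) :
    DifferentiableWithinAt ℂ f s x := by
  have map_smul (c : ℂ) (v : E) : L (c • v) = c • L v := by
    have h := real_linearMap_map_smul_complex
      (ℓ := (L : E →ₗ[ℝ] F) ∘ₗ (LinearMap.toSpanSingleton ℂ E v).restrictScalars ℝ)
      (by simpa using hL v) c 1
    simpa using h
  let Lc : E →L[ℂ] F := { L with map_smul' := map_smul }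
  exact (hf.of_restrictScalars ℝ (f' := Lc) rfl).differentiableWithinAt

lemma fderivWithin_real_apply (hs : UniqueDiffWithinAt ℝ s x)
    (hf : DifferentiableWithinAt ℂ f s x) (v : E) :
    fderivWithin ℝ f s x v = fderivWithin ℂ f s x v :=
  (DFunLike.congr_fun (hf.restrictScalars_fderivWithin ℝ hs) v).symm

lemma fderivWithin_real_I_smul (hs : UniqueDiffWithinAt ℝ s x)
    (hf : DifferentiableWithinAt ℂ f s x) (v : E) :
    fderivWithin ℝ f s x (I • v) = I • fderivWithin ℝ f s x v := by
  simp only [fderivWithin_real_apply hs hf, map_smul]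

lemma differentiableOn_complex_of_differentiableOn_interior (hs : UniqueDiffOn ℝ s)
    (hcl : s ⊆ closure (interior s)) (hf : ContDiffOn ℝ 1 f s)
    (hhol : DifferentiableOn ℂ f (interior s)) : DifferentiableOn ℂ f s := by
  have hcont (v : E) : ContinuousOn (fun y => fderivWithin ℝ f s y v) s :=
    (hf.continuousOn_fderivWithin hs le_rfl).clm_apply continuousOn_const
  have hinterior (v : E) : EqOn (fun y => fderivWithin ℝ f s y (I • v))
      (fun y => I • fderivWithin ℝ f s y v) (interior s) := fun y hy =>
    fderivWithin_real_I_smul (hs y (interior_subset hy))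
      (hhol.differentiableAt (isOpen_interior.mem_nhds hy)).differentiableWithinAt v
  have hlin (v : E) := (hinterior v).of_subset_closure (hcont _)
    ((hcont v).const_smul I) interior_subset hcl
  exact fun y hy => differentiableWithinAt_complex_of_map_I_smul
    (hf.differentiableOn one_ne_zero y hy).hasFDerivWithinAt fun v => hlin v hy

lemma hasFDerivWithinAt_fderivWithin_apply (hs : UniqueDiffOn ℝ s) (hf : ContDiffOn ℝ 2 f s)
    (hx : x ∈ s) (v : E) :
    HasFDerivWithinAt (fun y => fderivWithin ℝ f s y v)
      ((fderivWithin ℝ (fderivWithin ℝ f s) s x).flip v) s x := by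
  have hD : ContDiffOn ℝ 1 (fderivWithin ℝ f s) s := hf.fderivWithin hs (by norm_num)
  exact (ContinuousLinearMap.apply ℝ F v).hasFDerivAt.comp_hasFDerivWithinAt x
    (hD.differentiableOn one_ne_zero x hx).hasFDerivWithinAt

/-- The second derivative is complex linear in the direction in which `f` is differentiated first,
hence, by symmetry, in the other one. -/
lemma differentiableOn_fderivWithin_apply (hs : UniqueDiffOn ℝ s)
    (hcl : s ⊆ closure (interior s)) (hf : ContDiffOn ℝ 2 f s) (hhol : DifferentiableOn ℂ f s)
    (e : E) : DifferentiableOn ℂ (fun y => fderivWithin ℂ f s y e) s := by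
  have hreal : EqOn (fun y => fderivWithin ℂ f s y e) (fun y => fderivWithin ℝ f s y e) s :=
    fun y hy => (fderivWithin_real_apply (hs y hy) (hhol y hy) e).symm
  refine DifferentiableOn.congr (fun x hx => ?_) hreal
  have hsecond := hasFDerivWithinAt_fderivWithin_apply hs hf hx
  have hsymm : IsSymmSndFDerivWithinAt ℝ f s x :=
    (hf x hx).isSymmSndFDerivWithinAt (by simp) hs (hcl hx) hx
  refine differentiableWithinAt_complex_of_map_I_smul (hsecond e) fun v => ?_
  have hlin := (hs x hx).eq
    ((hsecond (I • v)).congr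
      (fun y hy => (fderivWithin_real_I_smul (hs y hy) (hhol y hy) v).symm)
      (fderivWithin_real_I_smul (hs x hx) (hhol x hx) v).symm)
    ((hsecond v).const_smul I)
  simpa [hsymm.eq _ e] using DFunLike.congr_fun hlin e

lemma eq_of_differentiableOn_of_im_eq_zero {g : E → ℂ} (hconv : Convex ℝ s)
    (hs : UniqueDiffOn ℝ s) (hg : DifferentiableOn ℂ g s) (him : ∀ y ∈ s, (g y).im = 0)
    {y : E} (hx : x ∈ s) (hy : y ∈ s) : g x = g y := by
  refine hconv.is_const_of_fderivWithin_eq_zero hg (fun w hw => ?_) hx hy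
  set L := fderivWithin ℂ g s w
  have hderiv_im : imCLM.comp (L.restrictScalars ℝ) = 0 :=
    (hs w hw).eq
      (imCLM.hasFDerivAt.comp_hasFDerivWithinAt w ((hg w hw).hasFDerivWithinAt.restrictScalars ℝ))
      ((hasFDerivWithinAt_const 0 w s).congr him (him w hw))
  have him_L (v : E) : (L v).im = 0 := DFunLike.congr_fun hderiv_im v
  ext v
  -- The real part of `L v` is the imaginary part of `L (I • v)`.
  exact Complex.ext (by simpa using him_L (I • v)) (him_L v)

end UpToBoundary

section Taylor

variable {E F : Type*} [NormedAddCommGroup E] [NormedSpace ℝ E]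
  [NormedAddCommGroup F] [NormedSpace ℝ F] {f : E → F} {s : Set E} {x : E}

lemma norm_sub_sub_fderivWithin_le_of_lipschitzOnWith {t : Set E} {M : NNReal}
    (ht : Convex ℝ t) (hts : t ⊆ s) (hf : DifferentiableOn ℝ f s)
    (hM : LipschitzOnWith M (fderivWithin ℝ f s) t) {p z : E} (hp : p ∈ t) (hz : z ∈ t) :
    ‖f z - f p - fderivWithin ℝ f s p (z - p)‖ ≤ M * ‖z - p‖ ^ 2 := by
  have hseg : segment ℝ p z ⊆ t := ht.segment_subset hp hz
  rw [pow_two, ← mul_assoc]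
  refine (convex_segment p z).norm_image_sub_le_of_norm_hasFDerivWithin_le'
    (fun y hy => ((hf y (hts (hseg hy))).hasFDerivWithinAt).mono (hseg.trans hts))
    (fun y hy => ?_) (left_mem_segment ℝ p z) (right_mem_segment ℝ p z)
  exact (hM.norm_sub_le (hseg hy) hp).trans
    (mul_le_mul_of_nonneg_left (norm_sub_le_of_mem_segment hy) M.2)

lemma isBigO_sub_sub_fderivWithin (hconv : Convex ℝ s) (hs : UniqueDiffOn ℝ s)
    (hf : ContDiffOn ℝ 2 f s) (hx : x ∈ s) :
    (fun y : E × E => f y.1 - f y.2 - fderivWithin ℝ f s y.2 (y.1 - y.2))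
      =O[𝓝[s] x ×ˢ 𝓝[s] x] fun y => ‖y.1 - y.2‖ ^ 2 := by
  have hD : ContDiffOn ℝ 1 (fderivWithin ℝ f s) s := hf.fderivWithin hs (by norm_num)
  obtain ⟨M, t, ht, hM⟩ := (hD x hx).exists_lipschitzOnWith hconv
  obtain ⟨ε, hε, hεt⟩ := Metric.mem_nhdsWithin_iff.1 ht
  have hmem : ball x ε ∩ s ∈ 𝓝[s] x :=
    inter_mem (mem_nhdsWithin_of_mem_nhds (ball_mem_nhds x hε)) self_mem_nhdsWithin
  refine IsBigO.of_bound M ?_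
  filter_upwards [prod_mem_prod hmem hmem] with y hy
  rw [norm_pow, norm_norm]
  exact norm_sub_sub_fderivWithin_le_of_lipschitzOnWith ((convex_ball x ε).inter hconv)
    inter_subset_right (hf.differentiableOn two_ne_zero) (hM.mono hεt) hy.2 hy.1

end Taylor

section Boundary

variable {E : Type*} [NormedAddCommGroup E] [NormedSpace ℂ E]

lemma exists_one_sub_norm_le_mul_norm_sub_one {φ : ℂ → ℂ} (hd : DifferentiableOn ℂ φ (ball 0 1))
    (hφ : ∀ z ∈ ball (0 : ℂ) 1, ‖φ z‖ ≤ 1) (hne : ∀ z ∈ ball (0 : ℂ) 1, φ z ≠ 1) :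
    ∃ C : ℝ, ∀ z ∈ ball (0 : ℂ) 1, 1 - ‖z‖ ≤ C * ‖φ z - 1‖ := by
  have hne' (z : ℂ) (hz : z ∈ ball (0 : ℂ) 1) : φ z - 1 ≠ 0 := sub_ne_zero.2 (hne z hz)
  have hre : MapsTo (fun z => (φ z - 1)⁻¹) (ball 0 1) {w | w.re ≤ 1} := fun z hz => by
    have : (φ z - 1).re ≤ 0 := by
      simpa using (re_le_norm (φ z)).trans (hφ z hz)
    simp only [mem_ofPred_eq, inv_re]
    exact (div_nonpos_of_nonpos_of_nonneg this (normSq_nonneg _)).trans zero_le_one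
  set c := ‖(φ 0 - 1)⁻¹‖
  refine ⟨2 + 2 * c, fun z hz => ?_⟩
  have hz1 : ‖z‖ < 1 := mem_ball_zero_iff.1 hz
  have hpos : 0 < ‖φ z - 1‖ := norm_pos_iff.2 (hne' z hz)
  have hle : ‖φ z - 1‖⁻¹ ≤ (2 + 2 * c) / (1 - ‖z‖) := by
    calc ‖φ z - 1‖⁻¹ = ‖(φ z - 1)⁻¹‖ := (norm_inv _).symm
      _ ≤ 2 * 1 * ‖z‖ / (1 - ‖z‖) + c * (1 + ‖z‖) / (1 - ‖z‖) :=
        borelCaratheodory one_pos ((hd.sub_const 1).inv hne') hre one_pos hz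
      _ = (2 * ‖z‖ + c * (1 + ‖z‖)) / (1 - ‖z‖) := by ring
      _ ≤ (2 + 2 * c) / (1 - ‖z‖) := by
        have : 0 ≤ c := norm_nonneg _
        have : 0 ≤ 1 - ‖z‖ := by linarith
        exact div_le_div_of_nonneg_right (by nlinarith) this
  rw [inv_le_iff_one_le_mul₀ hpos, div_mul_eq_mul_div, le_div_iff₀ (by linarith)] at hle
  linarith

/-- A qualitative form of Hopf's boundary lemma. -/
lemma apply_zero_eq_one_of_hasFDerivWithinAt_zero {φ : ℂ → ℂ}
    (hd : DifferentiableOn ℂ φ (ball 0 1)) (hφ : ∀ z ∈ ball (0 : ℂ) 1, ‖φ z‖ ≤ 1)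
    (h1 : φ 1 = 1) (hderiv : HasFDerivWithinAt φ (0 : ℂ →L[ℂ] ℂ) (closedBall 0 1) 1) :
    φ 0 = 1 := by
  by_contra h0
  have hne (z : ℂ) (hz : z ∈ ball (0 : ℂ) 1) : φ z ≠ 1 := fun hz1 => by
    have hmax : IsMaxOn (norm ∘ φ) (ball 0 1) z := fun w hw => by simpa [hz1] using hφ w hw
    have := eqOn_of_isPreconnected_of_isMaxOn_norm (convex_ball _ _).isPreconnected isOpen_ball hd
      hz hmax (mem_ball_self one_pos)
    exact h0 (this.trans hz1)
  obtain ⟨C, hC⟩ := exists_one_sub_norm_le_mul_norm_sub_one hd hφ hne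
  have hlim : Tendsto ((↑) : ℝ → ℂ) (𝓝[<] 1) (𝓝[closedBall 0 1] 1) := by
    refine tendsto_nhdsWithin_iff.2 ⟨?_, ?_⟩
    · exact (Complex.continuous_ofReal.tendsto' 1 1 Complex.ofReal_one).mono_left nhdsWithin_le_nhds
    · filter_upwards [Ioo_mem_nhdsLT zero_lt_one] with t ht
      simpa [abs_of_pos ht.1] using ht.2.le
  have hlittle : (fun t : ℝ => φ t - 1) =o[𝓝[<] 1] fun t : ℝ => t - 1 := by
    have := (hderiv.isLittleO.comp_tendsto hlim).norm_right
    refine (IsLittleO.congr_left this fun t => by simp [h1]).of_norm_right.trans_le fun t => ?_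
    simp [← Complex.ofReal_one, ← Complex.ofReal_sub]
  have hbig : (fun t : ℝ => t - 1) =O[𝓝[<] 1] fun t : ℝ => φ t - 1 := by
    refine IsBigO.of_bound C ?_
    filter_upwards [Ioo_mem_nhdsLT zero_lt_one] with t ht
    have := hC t (by simpa [abs_of_pos ht.1] using ht.2)
    rwa [norm_real, Real.norm_of_nonneg ht.1.le, ← Real.norm_of_nonneg (sub_nonneg.2 ht.2.le),
      norm_sub_rev] at this
  refine hbig.not_isLittleO (Eventually.frequently ?_) hlittle
  filter_upwards [self_mem_nhdsWithin] with t ht using (sub_neg.2 ht).ne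

lemma eqOn_one_of_hasFDerivWithinAt_zero {g : E → ℂ} {ζ : E} (hζ : ‖ζ‖ ≤ 1)
    (hd : DifferentiableOn ℂ g (closedBall 0 1)) (hg : ∀ z ∈ closedBall (0 : E) 1, ‖g z‖ ≤ 1)
    (hgζ : g ζ = 1) (hderiv : HasFDerivWithinAt g (0 : E →L[ℂ] ℂ) (closedBall 0 1) ζ) :
    EqOn g 1 (closedBall 0 1) := by
  let ray : ℂ →L[ℂ] E := ContinuousLinearMap.toSpanSingleton ℂ ζ
  have hray : MapsTo ray (closedBall 0 1) (closedBall 0 1) := fun l hl => by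
    simpa [ray, norm_smul] using mul_le_one₀ (by simpa using hl) (norm_nonneg _) hζ
  have hray1 : ray 1 = ζ := by simp [ray]
  have hg0 : g 0 = 1 := by
    have hcomp : HasFDerivWithinAt (g ∘ ray) (0 : ℂ →L[ℂ] ℂ) (closedBall 0 1) 1 := by
      have := HasFDerivWithinAt.comp 1 (hray1.symm ▸ hderiv) ray.hasFDerivAt.hasFDerivWithinAt hray
      rwa [ContinuousLinearMap.zero_comp] at this
    simpa using apply_zero_eq_one_of_hasFDerivWithinAt_zero
      ((hd.comp ray.differentiable.differentiableOn hray).mono ball_subset_closedBall)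
      (fun z hz => hg _ (hray (ball_subset_closedBall hz))) (by simp [hray1, hgζ]) hcomp
  have hmax : IsMaxOn (norm ∘ g) (ball 0 1) 0 := fun w hw => by
    simpa [hg0] using hg w (ball_subset_closedBall hw)
  intro z hz
  exact (eqOn_closedBall_of_isMaxOn_norm
    (hd.mono closure_ball_subset_closedBall).diffContOnCl hmax hz).trans hg0

lemma apply_nonneg_of_hasFDerivWithinAt {f : E → ℂ} {s : Set E} {x v : E} {L : E →L[ℂ] ℂ}
    (hs : Convex ℝ s) (hx : x ∈ s) (hL : HasFDerivWithinAt f L s x)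
    (hf : ∀ y ∈ s, ‖f y‖ ≤ 1) (hfx : f x = 1)
    (hv : ∀ u : ℂ, ‖u‖ = 1 → x + (u - 1) • v ∈ s) : 0 ≤ L v := by
  have hmax : IsLocalMaxOn (fun y => (f y).re) s x := IsMaxOn.localize fun y hy => by
    simpa [hfx] using (re_le_norm _).trans (hf y hy)
  have hre : HasFDerivWithinAt (fun y => (f y).re) (reCLM.comp (L.restrictScalars ℝ)) s x :=
    reCLM.hasFDerivAt.comp_hasFDerivWithinAt x (hL.restrictScalars ℝ)
  obtain ⟨u, hu, hLv⟩ := RCLike.exists_norm_eq_mul_self (L v)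
  have hdir : (L ((u - 1) • v)).re ≤ 0 := hmax.hasFDerivWithinAt_nonpos hre
    (mem_posTangentConeAt_of_segment_subset (hs.segment_subset hx (hv u hu)))
  have hnorm : ‖L v‖ ≤ (L v).re := by
    have : u * L v = ‖L v‖ := hLv.symm
    simpa [sub_mul, this] using hdir
  exact re_eq_norm.1 ((re_le_norm _).antisymm hnorm)

end Boundary

lemma map_eq_sum_map_single_mul {R ι F : Type*} [CommSemiring R] [Fintype ι] [DecidableEq ι]
    [FunLike F (ι → R) R] [LinearMapClass F R (ι → R) R] (L : F) (v : ι → R) :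
    L v = ∑ j, L (Pi.single j 1) * v j := by
  conv_lhs => rw [← Finset.univ_sum_single v, map_sum]
  refine Finset.sum_congr rfl fun j _ => ?_
  rw [mul_comm, ← smul_eq_mul, ← map_smul, ← Pi.single_smul, smul_eq_mul, mul_one]

section Polydisc

variable {n : ℕ} {f : (Fin n → ℂ) → ℂ} {a z : Fin n → ℂ}

lemma polydisc_eq_ball : polydisc n = ball 0 1 := by
  ext z
  simp [polydisc, pi_norm_lt_iff]

lemma closedPolydisc_eq_closedBall : closedPolydisc n = closedBall 0 1 := by
  ext z
  simp [closedPolydisc, pi_norm_le_iff_of_nonneg]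

lemma one_mem_closedPolydisc : 1 ∈ closedPolydisc n := fun _ => by simp

lemma convex_closedPolydisc : Convex ℝ (closedPolydisc n) :=
  closedPolydisc_eq_closedBall ▸ convex_closedBall _ _

lemma closure_polydisc : closure (polydisc n) = closedPolydisc n := by
  rw [polydisc_eq_ball, closedPolydisc_eq_closedBall, closure_ball _ one_ne_zero]

lemma interior_closedPolydisc : interior (closedPolydisc n) = polydisc n := by
  rw [polydisc_eq_ball, closedPolydisc_eq_closedBall, interior_closedBall _ one_ne_zero]

lemma closedPolydisc_subset_closure_interior :
    closedPolydisc n ⊆ closure (interior (closedPolydisc n)) := by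
  rw [interior_closedPolydisc, closure_polydisc]

lemma uniqueDiffOn_closedPolydisc : UniqueDiffOn ℝ (closedPolydisc n) :=
  uniqueDiffOn_convex convex_closedPolydisc ⟨0, by simp [interior_closedPolydisc, polydisc]⟩

lemma norm_le_one_of_mem_closedPolydisc (hcont : ContinuousOn f (closedPolydisc n))
    (hmap : ∀ y ∈ polydisc n, ‖f y‖ ≤ 1) (hz : z ∈ closedPolydisc n) : ‖f z‖ ≤ 1 := by
  have hmaps : MapsTo f (polydisc n) (closedBall 0 1) := fun y hy => by simpa using hmap y hy
  rw [← closure_polydisc] at hcont hz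
  simpa [isClosed_closedBall.closure_eq] using hmaps.closure_of_continuousOn hcont hz

open Classical in
/-- The coordinate projection onto the face `{z | z j = 1 whenever a j ≠ 0}`. In the argument, `a`
is the complex gradient of `f` at the boundary point `1`. -/
def faceProj (a z : Fin n → ℂ) : Fin n → ℂ := fun j => if a j = 0 then z j else 1

lemma faceProj_apply_of_eq_zero {j : Fin n} (hj : a j = 0) : faceProj a z j = z j := if_pos hj

lemma faceProj_apply_of_ne_zero {j : Fin n} (hj : a j ≠ 0) : faceProj a z j = 1 := if_neg hj

lemma faceProj_one : faceProj a 1 = 1 := by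
  ext j
  simp [faceProj]

lemma mapsTo_faceProj : MapsTo (faceProj a) (closedPolydisc n) (closedPolydisc n) := by
  intro z hz j
  by_cases hj : a j = 0
  · simpa [faceProj_apply_of_eq_zero hj] using hz j
  · simp [faceProj_apply_of_ne_zero hj]

open Classical in
lemma hasFDerivAt_faceProj : HasFDerivAt (faceProj a)
    (ContinuousLinearMap.pi fun j =>
      if a j = 0 then ContinuousLinearMap.proj j else (0 : (Fin n → ℂ) →L[ℂ] ℂ)) z := by
  refine hasFDerivAt_pi.2 fun j => ?_
  by_cases hj : a j = 0
  · simpa [faceProj, hj] using hasFDerivAt_apply j z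
  · simpa [faceProj, hj] using hasFDerivAt_const (1 : ℂ) z

lemma differentiable_faceProj : Differentiable ℂ (faceProj a) :=
  fun _ => hasFDerivAt_faceProj.differentiableAt

lemma one_sub_re_nonneg {w : ℂ} (hw : ‖w‖ ≤ 1) : 0 ≤ (1 - w).re := by
  simpa using (re_le_norm w).trans hw

lemma norm_sub_one_sq_le {w : ℂ} (hw : ‖w‖ ≤ 1) : ‖w - 1‖ ^ 2 ≤ 2 * (1 - w).re := by
  have : ‖w‖ ^ 2 ≤ 1 := pow_le_one₀ (norm_nonneg w) hw
  rw [Complex.sq_norm, normSq_apply] at *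
  simp only [sub_re, sub_im, one_re, one_im]
  linarith

lemma norm_mul_one_sub_re_le_norm_sum (ha : ∀ j, 0 ≤ a j) (hz : z ∈ closedPolydisc n) (j : Fin n) :
    ‖a j‖ * (1 - z j).re ≤ ‖∑ k, a k * (z k - 1)‖ := by
  have hterm (k : Fin n) : ‖a k‖ * (1 - z k).re = (-(a k * (z k - 1))).re := by
    have hak : a k = (‖a k‖ : ℝ) := (Complex.norm_of_nonneg' (ha k)).symm
    rw [← mul_neg, neg_sub]
    nth_rewrite 2 [hak]
    exact (re_ofReal_mul _ _).symm
  have hnonneg (k : Fin n) : 0 ≤ ‖a k‖ * (1 - z k).re :=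
    mul_nonneg (norm_nonneg _) (one_sub_re_nonneg (hz k))
  calc ‖a j‖ * (1 - z j).re ≤ ∑ k, ‖a k‖ * (1 - z k).re :=
        Finset.single_le_sum (fun k _ => hnonneg k) (Finset.mem_univ j)
    _ = (-∑ k, a k * (z k - 1)).re := by
        simp only [hterm, ← Finset.sum_neg_distrib, re_sum]
    _ ≤ ‖∑ k, a k * (z k - 1)‖ := (re_le_norm _).trans_eq (norm_neg _)

/-- Indices with `a j = 0` contribute `2 / 0 = 0` to the constant. -/
lemma norm_sub_faceProj_sq_le (ha : ∀ j, 0 ≤ a j) (hz : z ∈ closedPolydisc n) :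
    ‖z - faceProj a z‖ ^ 2 ≤ (∑ j, 2 / ‖a j‖) * ‖∑ j, a j * (z j - 1)‖ := by
  have hnonneg (j : Fin n) : 0 ≤ 2 / ‖a j‖ := by positivity
  refine (Real.le_sqrt (norm_nonneg _) ?_).1 ((pi_norm_le_iff_of_nonneg (Real.sqrt_nonneg _)).2
    fun j => Real.le_sqrt_of_sq_le ?_)
  · positivity
  by_cases hj : a j = 0
  · rw [Pi.sub_apply, faceProj_apply_of_eq_zero hj, sub_self, norm_zero, zero_pow two_ne_zero]
    positivity
  rw [Pi.sub_apply, faceProj_apply_of_ne_zero hj]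
  calc ‖z j - 1‖ ^ 2 ≤ 2 * (1 - z j).re := norm_sub_one_sq_le (hz j)
    _ = 2 / ‖a j‖ * (‖a j‖ * (1 - z j).re) := by field_simp
    _ ≤ (∑ j, 2 / ‖a j‖) * ‖∑ j, a j * (z j - 1)‖ := by
        have : 0 ≤ ‖a j‖ * (1 - z j).re := mul_nonneg (norm_nonneg _) (one_sub_re_nonneg (hz j))
        gcongr
        · exact Finset.single_le_sum (fun j _ => hnonneg j) (Finset.mem_univ j)
        · exact norm_mul_one_sub_re_le_norm_sum ha hz j

/-- The complex gradient of `f` at the boundary point `1`, with derivatives taken within the closed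
polydisc. The face on which `f = 1` and the linear term of the expansion are both read off it. -/
def gradAtOne (f : (Fin n → ℂ) → ℂ) (j : Fin n) : ℂ :=
  fderivWithin ℂ f (closedPolydisc n) 1 (Pi.single j 1)

lemma apply_single_nonneg_of_hasFDerivWithinAt {L : (Fin n → ℂ) →L[ℂ] ℂ}
    (hz : z ∈ closedPolydisc n) (hL : HasFDerivWithinAt f L (closedPolydisc n) z)
    (hb : ∀ y ∈ closedPolydisc n, ‖f y‖ ≤ 1) (hfz : f z = 1) {j : Fin n} (hj : z j = 1) :
    0 ≤ L (Pi.single j 1) := by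
  refine apply_nonneg_of_hasFDerivWithinAt convex_closedPolydisc hz hL hb hfz fun u hu k => ?_
  obtain rfl | hkj := eq_or_ne k j
  · simp [hj, hu]
  · simpa [hkj] using hz k

lemma hasFDerivWithinAt_comp_faceProj_gradAtOne
    (hf : DifferentiableWithinAt ℂ f (closedPolydisc n) 1) :
    HasFDerivWithinAt (f ∘ faceProj (gradAtOne f)) (0 : (Fin n → ℂ) →L[ℂ] ℂ)
      (closedPolydisc n) 1 := by
  have hf' : HasFDerivWithinAt f (fderivWithin ℂ f (closedPolydisc n) 1) (closedPolydisc n)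
      (faceProj (gradAtOne f) 1) := faceProj_one.symm ▸ hf.hasFDerivWithinAt
  refine (hf'.comp 1 hasFDerivAt_faceProj.hasFDerivWithinAt mapsTo_faceProj).congr_fderiv ?_
  ext1 v
  rw [ContinuousLinearMap.comp_apply, map_eq_sum_map_single_mul]
  refine Finset.sum_eq_zero fun j _ => ?_
  by_cases hj : gradAtOne f j = 0
  · exact mul_eq_zero_of_left hj _
  · simp [hj]

section BoundedByOne

variable (hd : DifferentiableOn ℂ f (closedPolydisc n)) (hf : ContDiffOn ℝ 2 f (closedPolydisc n))
  (hb : ∀ y ∈ closedPolydisc n, ‖f y‖ ≤ 1) (hf1 : f 1 = 1)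
include hd hb hf1

lemma gradAtOne_nonneg (j : Fin n) : 0 ≤ gradAtOne f j :=
  apply_single_nonneg_of_hasFDerivWithinAt one_mem_closedPolydisc
    (hd 1 one_mem_closedPolydisc).hasFDerivWithinAt hb hf1 rfl

lemma apply_faceProj_gradAtOne (hz : z ∈ closedPolydisc n) : f (faceProj (gradAtOne f) z) = 1 := by
  have hcomp := hasFDerivWithinAt_comp_faceProj_gradAtOne (hd 1 one_mem_closedPolydisc)
  have hd' : DifferentiableOn ℂ (f ∘ faceProj (gradAtOne f)) (closedPolydisc n) :=
    hd.comp differentiable_faceProj.differentiableOn mapsTo_faceProj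
  have hb' (y : Fin n → ℂ) (hy : y ∈ closedPolydisc n) : ‖f (faceProj (gradAtOne f) y)‖ ≤ 1 :=
    hb _ (mapsTo_faceProj hy)
  have h1 := one_mem_closedPolydisc (n := n)
  rw [closedPolydisc_eq_closedBall] at hcomp hd' hb' h1 hz
  exact eqOn_one_of_hasFDerivWithinAt_zero (mem_closedBall_zero_iff.1 h1) hd' hb'
    (by rw [Function.comp_apply, faceProj_one, hf1]) hcomp hz

include hf

lemma fderivWithin_faceProj_gradAtOne_single {j : Fin n} (hj : gradAtOne f j ≠ 0)
    (hz : z ∈ closedPolydisc n) :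
    fderivWithin ℂ f (closedPolydisc n) (faceProj (gradAtOne f) z) (Pi.single j 1)
      = gradAtOne f j := by
  have hd' : DifferentiableOn ℂ (fun y => fderivWithin ℂ f (closedPolydisc n)
      (faceProj (gradAtOne f) y) (Pi.single j 1)) (closedPolydisc n) :=
    (differentiableOn_fderivWithin_apply uniqueDiffOn_closedPolydisc
      closedPolydisc_subset_closure_interior hf hd _).comp
      differentiable_faceProj.differentiableOn mapsTo_faceProj
  have hnonneg (y : Fin n → ℂ) (hy : y ∈ closedPolydisc n) :
      0 ≤ fderivWithin ℂ f (closedPolydisc n) (faceProj (gradAtOne f) y) (Pi.single j 1) :=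
    apply_single_nonneg_of_hasFDerivWithinAt (mapsTo_faceProj hy)
      (hd _ (mapsTo_faceProj hy)).hasFDerivWithinAt hb (apply_faceProj_gradAtOne hd hb hf1 hy)
      (faceProj_apply_of_ne_zero hj)
  have := eq_of_differentiableOn_of_im_eq_zero convex_closedPolydisc uniqueDiffOn_closedPolydisc hd'
    (fun y hy => (nonneg_iff.1 (hnonneg y hy)).2.symm) hz one_mem_closedPolydisc
  rwa [faceProj_one] at this

lemma fderivWithin_faceProj_gradAtOne_sub (hz : z ∈ closedPolydisc n) :
    fderivWithin ℂ f (closedPolydisc n) (faceProj (gradAtOne f) z)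
      (z - faceProj (gradAtOne f) z) = ∑ j, gradAtOne f j * (z j - 1) := by
  rw [map_eq_sum_map_single_mul]
  refine Finset.sum_congr rfl fun j _ => ?_
  by_cases hj : gradAtOne f j = 0
  · simp [hj, faceProj_apply_of_eq_zero hj]
  · rw [fderivWithin_faceProj_gradAtOne_single hd hf hb hf1 hj hz, Pi.sub_apply,
      faceProj_apply_of_ne_zero hj]

lemma isBigO_sub_one_sum_gradAtOne : (fun z => f z - 1)
    =O[𝓝[closedPolydisc n] 1] fun z => ∑ j, gradAtOne f j * (z j - 1) := by
  set a := gradAtOne f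
  have hface : Tendsto (faceProj a) (𝓝[closedPolydisc n] 1) (𝓝[closedPolydisc n] 1) := by
    have := (differentiable_faceProj (a := a)).continuous.continuousWithinAt.tendsto_nhdsWithin
      (mapsTo_faceProj (a := a)) (x := 1)
    rwa [faceProj_one] at this
  have htaylor := (isBigO_sub_sub_fderivWithin convex_closedPolydisc uniqueDiffOn_closedPolydisc hf
    one_mem_closedPolydisc).comp_tendsto (tendsto_id.prodMk hface)
  have hsq : (fun z => ‖z - faceProj a z‖ ^ 2)
      =O[𝓝[closedPolydisc n] 1] fun z => ∑ j, a j * (z j - 1) :=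
    IsBigO.of_bound (∑ j, 2 / ‖a j‖) <| by
      filter_upwards [self_mem_nhdsWithin] with z hz
      simpa using norm_sub_faceProj_sq_le (gradAtOne_nonneg hd hb hf1) hz
  refine ((htaylor.trans hsq).add (isBigO_refl _ _)).congr' ?_ .rfl
  filter_upwards [self_mem_nhdsWithin] with z hz
  have hp := mapsTo_faceProj (a := a) hz
  rw [Function.comp_apply, id_eq, apply_faceProj_gradAtOne hd hb hf1 hz,
    fderivWithin_real_apply (uniqueDiffOn_closedPolydisc _ hp) (hd _ hp),
    fderivWithin_faceProj_gradAtOne_sub hd hf hb hf1 hz, sub_add_cancel]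

end BoundedByOne
end Polydisc
end

theorem julia_caratheodory_linearization (n : ℕ) (f : (Fin n → ℂ) → ℂ)
    (hhol : DifferentiableOn ℂ f (polydisc n))
    (hsm : ContDiffOn ℝ 2 f (closedPolydisc n))
    (hmap : ∀ z ∈ polydisc n, ‖f z‖ < 1)
    (hfζ : f (fun _ => 1) = 1) :
    ∃ U ∈ nhds (fun _ => (1:ℂ)), ∃ C > (0:ℝ), ∀ z ∈ polydisc n ∩ U,
      ‖f z - 1‖ ≤ C * ‖∑ j : Fin n,
        fderivWithin ℝ f (closedPolydisc n) (fun _ => 1) (Pi.single j 1) * (z j - 1)‖ := by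
  have hd : DifferentiableOn ℂ f (closedPolydisc n) :=
    differentiableOn_complex_of_differentiableOn_interior uniqueDiffOn_closedPolydisc
      closedPolydisc_subset_closure_interior (hsm.of_le one_le_two)
      (interior_closedPolydisc.symm ▸ hhol)
  obtain ⟨C, hC, hbound⟩ := (isBigO_sub_one_sum_gradAtOne hd hsm
    (fun _ => norm_le_one_of_mem_closedPolydisc hsm.continuousOn fun y hy => (hmap y hy).le)
    hfζ).exists_pos
  obtain ⟨U, hU, hUbound⟩ := mem_nhdsWithin_iff_exists_mem_nhds_inter.1 hbound.bound
  refine ⟨U, hU, C, hC, fun z hz => ?_⟩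
  have h1 := one_mem_closedPolydisc (n := n)
  have hgrad (j : Fin n) : fderivWithin ℝ f (closedPolydisc n) (fun _ => 1) (Pi.single j 1)
      = gradAtOne f j := fderivWithin_real_apply (uniqueDiffOn_closedPolydisc 1 h1) (hd 1 h1) _
  simp only [hgrad]
  exact hUbound ⟨hz.2, closure_polydisc ▸ subset_closure hz.1⟩

end
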